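/- arXiv:1110.1543 — 2 statements merged into one kernel-verified Lean document; each statement's English description precedes it below -/
import Mathlib

section
/- Let N ≥ 2, let B ⊂ ℝ^N be a radial domain and let 𝓤 be a set of continuous functions defined on B. Define M = {e ∈ S : u(x) ≥ u(σ_e(x)) for all x ∈ B(e) and all u ∈ 𝓤}. If S = M ∪ (−M), i.e., for every e ∈ S either u ≥ u ∘ σ_e on B(e) for all u ∈ 𝓤 or u ≤ u ∘ σ_e on B(e) for all u ∈ 𝓤, then there exists p ∈ S such that every u ∈ 𝓤 is foliated Schwarz symmetric with respect to p. -/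
/-!
Fix `u ∈ 𝓤` and a sphere of radius `r` in `B`, and let `v = ∫ u(rω) rω dω` over the unit sphere.
Since `σ_e` preserves the surface measure,
`2 ⟪v, e⟫ = ∫ (u(rω) - u(σ_e(rω))) ⟪rω, e⟫ dω`.
For `e ∈ M` the integrand is nonnegative, so `⟪v, e⟫ ≥ 0`, and `⟪v, e⟫ > 0` as soon as
`u ≠ u ∘ σ_e` somewhere on the sphere of radius `r`.

If `M = S`, every axis works.  Otherwise some `e ∉ M`, and then `-e ∈ M` gives `u` and `r` with
`v ≠ 0`; let `p = v / ‖v‖`.  A unit vector `f` with `⟪f, p⟫ > 0` lies in `M`, since `-f ∈ M` would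
force `⟪v, f⟫ ≤ 0`.  As `M` is closed, it contains the closed hemisphere around `p`.  This is the
desired symmetry, because distinct points `x`, `y` of equal norm are exchanged by the reflection
in the hyperplane orthogonal to `x - y`.
-/

open Set Metric Filter
open scoped RealInnerProductSpace

noncomputable section

variable {N : ℕ}

/-- Reflection through the hyperplane `H(e) = {x : ⟪x,e⟫ = 0}`:
`σ_e(x) = x - 2 (x·e) e`. -/
def reflHyp (e x : EuclideanSpace ℝ (Fin N)) : EuclideanSpace ℝ (Fin N) :=
  x - (2 * ⟪x, e⟫) • e

/-- The half domain `B(e) = {x ∈ B : x·e > 0}`. -/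
def halfDom (B : Set (EuclideanSpace ℝ (Fin N))) (e : EuclideanSpace ℝ (Fin N)) :
    Set (EuclideanSpace ℝ (Fin N)) := {x ∈ B | 0 < ⟪x, e⟫}

/-- A radial domain: an open ball or an open annulus centered at the origin. -/
def IsRadialDomain (B : Set (EuclideanSpace ℝ (Fin N))) : Prop :=
  (∃ R, 0 < R ∧ B = Metric.ball 0 R) ∨
  (∃ r R, 0 < r ∧ r < R ∧ B = {x : EuclideanSpace ℝ (Fin N) | r < ‖x‖ ∧ ‖x‖ < R})

/-- `u` is foliated Schwarz symmetric on `D` with respect to the unit vector `p`: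
`u(x) ≥ u(y)` whenever `|x| = |y|` and `x·p ≥ y·p`.  (This is equivalent to axial
symmetry with respect to `ℝp` together with monotonicity in the polar angle.) -/
def FoliatedSchwarzOn (D : Set (EuclideanSpace ℝ (Fin N)))
    (u : EuclideanSpace ℝ (Fin N) → ℝ) (p : EuclideanSpace ℝ (Fin N)) : Prop :=
  ∀ x ∈ D, ∀ y ∈ D, ‖x‖ = ‖y‖ → ⟪y, p⟫ ≤ ⟪x, p⟫ → u y ≤ u x

/-- The set `M = {e ∈ S : u ≥ u ∘ σ_e on B(e) for all u ∈ 𝓤}`. -/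
def reflMonotoneSet (B : Set (EuclideanSpace ℝ (Fin N)))
    (𝓤 : Set (EuclideanSpace ℝ (Fin N) → ℝ)) : Set (EuclideanSpace ℝ (Fin N)) :=
  {e | ‖e‖ = 1 ∧ ∀ u ∈ 𝓤, ∀ x ∈ halfDom B e, u (reflHyp e x) ≤ u x}

open MeasureTheory NormedSpace Topology

section Hemisphere

variable {E : Type*} [NormedAddCommGroup E] [InnerProductSpace ℝ E] {x y p f : E}

lemma real_inner_normalize_left (x y : E) : ⟪normalize x, y⟫ = ‖x‖⁻¹ * ⟪x, y⟫ :=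
  real_inner_smul_left x y _

lemma real_inner_normalize_right (x y : E) : ⟪x, normalize y⟫ = ‖y‖⁻¹ * ⟪x, y⟫ :=
  real_inner_smul_right x y _

lemma real_inner_sub_right_pos (hxy : ‖x‖ = ‖y‖) (hne : x ≠ y) : 0 < ⟪x, x - y⟫ := by
  have norm_sq : ‖x - y‖ ^ 2 = 2 * ⟪x, x - y⟫ := by
    rw [norm_sub_sq_real, inner_sub_right, real_inner_self_eq_norm_sq, hxy]
    ring
  have norm_pos : 0 < ‖x - y‖ := norm_sub_pos_iff.2 hne
  linarith [pow_pos norm_pos 2]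

lemma mem_closure_setOf_norm_eq_one_inner_pos (hp : p ≠ 0) (hf : ‖f‖ = 1) (hfp : 0 ≤ ⟪f, p⟫) :
    f ∈ closure {g | ‖g‖ = 1 ∧ 0 < ⟪g, p⟫} := by
  have inner_pos {t : ℝ} (ht : 0 < t) : 0 < ⟪f + t • p, p⟫ := by
    rw [inner_add_left, real_inner_smul_left]
    exact add_pos_of_nonneg_of_pos hfp (mul_pos ht (real_inner_self_pos.2 hp))
  have ne_zero {t : ℝ} (ht : 0 < t) : f + t • p ≠ 0 := fun h => by
    simpa [h] using inner_pos ht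
  have continuousAt : ContinuousAt (fun t : ℝ => normalize (f + t • p)) 0 := by
    have affine : ContinuousAt (fun t : ℝ => f + t • p) 0 := by fun_prop
    exact (affine.norm.inv₀ (by simp [hf])).smul affine
  have tendsto : Tendsto (fun t : ℝ => normalize (f + t • p)) (𝓝[>] 0) (𝓝 f) := by
    simpa [normalize_eq_self_of_norm_eq_one hf] using
      continuousAt.tendsto.mono_left nhdsWithin_le_nhds
  refine mem_closure_of_tendsto tendsto ?_
  filter_upwards [self_mem_nhdsWithin] with t ht
  refine ⟨norm_normalize_eq_one_iff.2 (ne_zero ht), ?_⟩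
  rw [real_inner_normalize_left]
  exact mul_pos (inv_pos.2 (norm_pos_iff.2 (ne_zero ht))) (inner_pos ht)

end Hemisphere

/-! ### Surface moments -/

section SphereMoment

open scoped Pointwise

variable {E : Type*} [NormedAddCommGroup E]

/-- The self-homeomorphism of the unit sphere induced by a linear isometry. -/
def unitSphereHomeomorph [NormedSpace ℝ E] (L : E ≃ₗᵢ[ℝ] E) :
    sphere (0 : E) 1 ≃ₜ sphere (0 : E) 1 :=
  L.toHomeomorph.subtype fun x => by simp

@[simp]
lemma coe_unitSphereHomeomorph [NormedSpace ℝ E] (L : E ≃ₗᵢ[ℝ] E) (ω : sphere (0 : E) 1) :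
    (unitSphereHomeomorph L ω : E) = L ω :=
  rfl

lemma smul_image_preimage_unitSphereHomeomorph [NormedSpace ℝ E] (L : E ≃ₗᵢ[ℝ] E)
    (I : Set ℝ) (s : Set (sphere (0 : E) 1)) :
    I • ((↑) '' (unitSphereHomeomorph L ⁻¹' s) : Set E) = L ⁻¹' (I • ((↑) '' s : Set E)) := by
  ext x
  simp only [Set.mem_smul, mem_image, mem_preimage, exists_exists_and_eq_and]
  constructor
  · rintro ⟨t, ht, ω, hω, rfl⟩
    exact ⟨t, ht, unitSphereHomeomorph L ω, hω, by simp⟩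
  · rintro ⟨t, ht, ω, hω, hx⟩
    refine ⟨t, ht, (unitSphereHomeomorph L).symm ω, by simpa using hω, L.injective ?_⟩
    rw [map_smul, ← coe_unitSphereHomeomorph, Homeomorph.apply_symm_apply, hx]

lemma measurePreserving_unitSphereHomeomorph [NormedSpace ℝ E] [MeasurableSpace E] [BorelSpace E]
    {μ : Measure E} {L : E ≃ₗᵢ[ℝ] E} (hL : MeasurePreserving L μ μ) :
    MeasurePreserving (unitSphereHomeomorph L) μ.toSphere μ.toSphere := by
  have measurable : Measurable (unitSphereHomeomorph L) :=
    (unitSphereHomeomorph L).continuous.measurable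
  refine ⟨measurable, Measure.ext fun s hs => ?_⟩
  rw [Measure.map_apply measurable hs, Measure.toSphere_apply' _ (measurable hs),
    Measure.toSphere_apply' _ hs, smul_image_preimage_unitSphereHomeomorph,
    hL.measure_preimage_emb L.toHomeomorph.measurableEmbedding]

lemma continuous_comp_smul_coe_unitSphere [NormedSpace ℝ E] {u : E → ℝ} {r : ℝ}
    (hr : 0 ≤ r) (hu : ContinuousOn u (sphere 0 r)) :
    Continuous fun ω : sphere (0 : E) 1 => u (r • (ω : E)) :=
  hu.comp_continuous (by fun_prop) fun ω => by simp [norm_smul, abs_of_nonneg hr]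

lemma continuousOn_comp_linearIsometryEquiv_sphere [NormedSpace ℝ E] {u : E → ℝ} {r : ℝ}
    (hu : ContinuousOn u (sphere 0 r)) (L : E ≃ₗᵢ[ℝ] E) : ContinuousOn (u ∘ L) (sphere 0 r) :=
  hu.comp L.continuous.continuousOn fun x hx => by simpa using hx

variable [InnerProductSpace ℝ E] [FiniteDimensional ℝ E] [MeasurableSpace E] [BorelSpace E]

/-- The first moment of `u` over the sphere of radius `r`.  The integral is taken over the unit
sphere, which only omits the constant Jacobian of `ω ↦ r • ω`. -/
def sphereMoment (u : E → ℝ) (r : ℝ) : E :=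
  ∫ ω : sphere (0 : E) 1, u (r • (ω : E)) • r • (ω : E) ∂volume.toSphere

lemma sphereMoment_comp_linearIsometryEquiv (u : E → ℝ) (r : ℝ) (L : E ≃ₗᵢ[ℝ] E) :
    sphereMoment (u ∘ L) r = L.symm (sphereMoment u r) := by
  rw [L.eq_symm_apply]
  calc L (sphereMoment (u ∘ L) r)
      = ∫ ω : sphere (0 : E) 1, L (u (L (r • (ω : E))) • r • (ω : E)) ∂volume.toSphere :=
        (L.toLinearIsometry.integral_comp_comm _).symm
    _ = ∫ ω : sphere (0 : E) 1, u (r • (unitSphereHomeomorph L ω : E)) •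
          r • (unitSphereHomeomorph L ω : E) ∂volume.toSphere := by
        simp only [map_smul, coe_unitSphereHomeomorph]
    _ = sphereMoment u r :=
        (measurePreserving_unitSphereHomeomorph L.measurePreserving).integral_comp
          (unitSphereHomeomorph L).measurableEmbedding
          fun ω => u (r • (ω : E)) • r • (ω : E)

lemma integrable_smul_smul_toSphere {u : E → ℝ} {r : ℝ} (hr : 0 ≤ r)
    (hu : ContinuousOn u (sphere 0 r)) :
    Integrable (fun ω : sphere (0 : E) 1 => u (r • (ω : E)) • r • (ω : E)) volume.toSphere :=
  ((continuous_comp_smul_coe_unitSphere hr hu).smul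
    (continuous_subtype_val.const_smul r)).integrable_of_hasCompactSupport (.of_compactSpace _)

lemma sphereMoment_sub {u w : E → ℝ} {r : ℝ} (hr : 0 ≤ r) (hu : ContinuousOn u (sphere 0 r))
    (hw : ContinuousOn w (sphere 0 r)) :
    sphereMoment (u - w) r = sphereMoment u r - sphereMoment w r := by
  simp only [sphereMoment, Pi.sub_apply, sub_smul]
  exact integral_sub (integrable_smul_smul_toSphere hr hu) (integrable_smul_smul_toSphere hr hw)

lemma inner_sphereMoment {u : E → ℝ} {r : ℝ} (hr : 0 ≤ r) (hu : ContinuousOn u (sphere 0 r))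
    (e : E) :
    ⟪sphereMoment u r, e⟫ =
      ∫ ω : sphere (0 : E) 1, u (r • (ω : E)) * ⟪r • (ω : E), e⟫ ∂volume.toSphere := by
  rw [sphereMoment, real_inner_comm, ← integral_inner (integrable_smul_smul_toSphere hr hu)]
  simp only [real_inner_comm e, real_inner_smul_right]

lemma two_mul_inner_sphereMoment {u : E → ℝ} {r : ℝ} (hr : 0 ≤ r)
    (hu : ContinuousOn u (sphere 0 r)) (e : E) :
    2 * ⟪sphereMoment u r, e⟫ = ⟪sphereMoment (u - u ∘ (ℝ ∙ e)ᗮ.reflection) r, e⟫ := by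
  have reflected : ⟪(ℝ ∙ e)ᗮ.reflection (sphereMoment u r), e⟫ = -⟪sphereMoment u r, e⟫ := by
    rw [← (ℝ ∙ e)ᗮ.reflection.inner_map_map, Submodule.reflection_reflection,
      Submodule.reflection_orthogonalComplement_singleton_eq_neg, inner_neg_right]
  rw [sphereMoment_sub hr hu (continuousOn_comp_linearIsometryEquiv_sphere hu _),
    sphereMoment_comp_linearIsometryEquiv, Submodule.reflection_symm, inner_sub_left, reflected]
  ring

lemma inner_sphereMoment_nonneg {u : E → ℝ} {r : ℝ} (hr : 0 ≤ r)
    (hu : ContinuousOn u (sphere 0 r)) {e : E}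
    (hue : ∀ x ∈ sphere (0 : E) r, 0 ≤ u x * ⟪x, e⟫) : 0 ≤ ⟪sphereMoment u r, e⟫ := by
  rw [inner_sphereMoment hr hu]
  exact integral_nonneg fun ω => hue _ (by simp [norm_smul, abs_of_nonneg hr])

lemma inner_sphereMoment_pos {u : E → ℝ} {r : ℝ} (hr : 0 ≤ r)
    (hu : ContinuousOn u (sphere 0 r)) {e : E}
    (hue : ∀ x ∈ sphere (0 : E) r, 0 ≤ u x * ⟪x, e⟫) {x : E} (hx : x ∈ sphere 0 r)
    (hxe : u x * ⟪x, e⟫ ≠ 0) : 0 < ⟪sphereMoment u r, e⟫ := by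
  have hx0 : x ≠ 0 := by
    rintro rfl
    simp at hxe
  have continuous : Continuous fun ω : sphere (0 : E) 1 => u (r • (ω : E)) * ⟪r • (ω : E), e⟫ :=
    (continuous_comp_smul_coe_unitSphere hr hu).mul (by fun_prop)
  rw [inner_sphereMoment hr hu]
  refine integral_pos_of_integrable_nonneg_nonzero
    (x := ⟨normalize x, by simpa using norm_normalize_eq_one_iff.2 hx0⟩) continuous
    (continuous.integrable_of_hasCompactSupport (.of_compactSpace _))
    (fun ω => hue _ (by simp [norm_smul, abs_of_nonneg hr])) ?_
  rwa [← mem_sphere_zero_iff_norm.1 hx, norm_smul_normalize]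

end SphereMoment

/-! ### The reflections `σ_e` and the set `M` -/

section ReflMonotoneSet

variable {B : Set (EuclideanSpace ℝ (Fin N))} {𝓤 : Set (EuclideanSpace ℝ (Fin N) → ℝ)}
  {u : EuclideanSpace ℝ (Fin N) → ℝ} {e x y p : EuclideanSpace ℝ (Fin N)}

lemma reflHyp_eq_reflection (he : ‖e‖ = 1) : reflHyp e = (ℝ ∙ e)ᗮ.reflection := by
  ext1 x
  rw [Submodule.reflection_orthogonal_apply, Submodule.reflection_singleton_apply, he, reflHyp,
    real_inner_comm]
  simp [mul_smul, two_smul]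

lemma reflHyp_neg (e x : EuclideanSpace ℝ (Fin N)) : reflHyp (-e) x = reflHyp e x := by
  simp [reflHyp]

lemma norm_reflHyp (he : ‖e‖ = 1) (x : EuclideanSpace ℝ (Fin N)) : ‖reflHyp e x‖ = ‖x‖ := by
  rw [reflHyp_eq_reflection he, LinearIsometryEquiv.norm_map]

lemma inner_reflHyp (he : ‖e‖ = 1) (x : EuclideanSpace ℝ (Fin N)) :
    ⟪reflHyp e x, e⟫ = -⟪x, e⟫ := by
  simp only [reflHyp, inner_sub_left, real_inner_smul_left, real_inner_self_eq_norm_sq, he]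
  ring

lemma reflHyp_reflHyp (he : ‖e‖ = 1) (x : EuclideanSpace ℝ (Fin N)) :
    reflHyp e (reflHyp e x) = x := by
  rw [reflHyp_eq_reflection he, Submodule.reflection_reflection]

lemma reflHyp_normalize_sub (hxy : ‖x‖ = ‖y‖) (hne : x ≠ y) :
    reflHyp (normalize (x - y)) x = y := by
  have hd : x - y ≠ 0 := sub_ne_zero.2 hne
  have span_normalize : (ℝ ∙ normalize (x - y)) = ℝ ∙ (x - y) :=
    Submodule.span_singleton_smul_eq (inv_ne_zero (norm_ne_zero_iff.2 hd)).isUnit _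
  rw [reflHyp_eq_reflection (norm_normalize_eq_one_iff.2 hd)]
  simp only [span_normalize]
  exact Submodule.reflection_sub hxy

/-- Rotation invariance of a set, encoded as: with each point it contains the whole sphere around
the origin through that point.  This is the property of radial domains that the symmetry argument
rests on. -/
def IsRotationInvariant {E : Type*} [NormedAddCommGroup E] (B : Set E) : Prop :=
  ∀ x ∈ B, sphere 0 ‖x‖ ⊆ B

lemma IsRadialDomain.isRotationInvariant (hB : IsRadialDomain B) : IsRotationInvariant B := by
  intro x hx y hy
  rw [mem_sphere_zero_iff_norm] at hy
  rcases hB with ⟨R, -, rfl⟩ | ⟨r, R, -, -, rfl⟩ <;> simpa [hy] using hx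

lemma IsRotationInvariant.reflHyp_mem (hB : IsRotationInvariant B) (he : ‖e‖ = 1) (hx : x ∈ B) :
    reflHyp e x ∈ B :=
  hB x hx (mem_sphere_zero_iff_norm.2 (norm_reflHyp he x))

/-- Both factors change sign under `x ↦ σ_e x`, which carries the half `⟪x, e⟫ < 0` to `B(e)`. -/
lemma mem_reflMonotoneSet_iff (hB : IsRotationInvariant B) :
    e ∈ reflMonotoneSet B 𝓤 ↔
      ‖e‖ = 1 ∧ ∀ u ∈ 𝓤, ∀ x ∈ B, 0 ≤ (u x - u (reflHyp e x)) * ⟪x, e⟫ := by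
  refine and_congr_right fun he => forall₂_congr fun u _ => ⟨fun h x hx => ?_, fun h x hx => ?_⟩
  · rcases lt_trichotomy ⟪x, e⟫ 0 with hneg | hzero | hpos
    · have := h (reflHyp e x) ⟨hB.reflHyp_mem he hx, by rw [inner_reflHyp he]; exact neg_pos.2 hneg⟩
      rw [reflHyp_reflHyp he] at this
      exact mul_nonneg_of_nonpos_of_nonpos (sub_nonpos.2 this) hneg.le
    · simp [hzero]
    · exact mul_nonneg (sub_nonneg.2 (h x ⟨hx, hpos⟩)) hpos.le
  · exact sub_nonneg.1 (nonneg_of_mul_nonneg_left (h x hx.1) hx.2)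

lemma continuousOn_comp_reflHyp_left (hu : ContinuousOn u (sphere 0 ‖x‖)) :
    ContinuousOn (fun e => u (reflHyp e x)) (sphere 0 1) := by
  refine hu.comp ?_ fun e he => ?_
  · unfold reflHyp
    fun_prop
  · rw [mem_sphere_zero_iff_norm] at he ⊢
    exact norm_reflHyp he x

lemma isClosed_reflMonotoneSet (hB : IsRotationInvariant B)
    (h𝓤 : ∀ u ∈ 𝓤, ∀ x ∈ B, ContinuousOn u (sphere 0 ‖x‖)) :
    IsClosed (reflMonotoneSet B 𝓤) := by
  have eq_inter : reflMonotoneSet B 𝓤 = sphere 0 1 ∩ ⋂ u ∈ 𝓤, ⋂ x ∈ B,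
      sphere 0 1 ∩ (fun e => (u x - u (reflHyp e x)) * ⟪x, e⟫) ⁻¹' Ici 0 := by
    ext e
    simp only [mem_reflMonotoneSet_iff hB, mem_inter_iff, mem_sphere_zero_iff_norm, mem_iInter,
      mem_preimage, mem_Ici]
    exact and_congr_right fun he => by simp only [he, true_and]
  rw [eq_inter]
  refine isClosed_sphere.inter <| isClosed_biInter fun u hu => isClosed_biInter fun x hx =>
    ContinuousOn.preimage_isClosed_of_isClosed ?_ isClosed_sphere isClosed_Ici
  exact (continuousOn_const.sub (continuousOn_comp_reflHyp_left (h𝓤 u hu x hx))).mul (by fun_prop)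

lemma continuousOn_comp_reflHyp {r : ℝ} (he : ‖e‖ = 1) (hu : ContinuousOn u (sphere 0 r)) :
    ContinuousOn (u ∘ reflHyp e) (sphere 0 r) := by
  rw [reflHyp_eq_reflection he]
  exact continuousOn_comp_linearIsometryEquiv_sphere hu _

lemma two_mul_inner_sphereMoment_eq_sub_comp_reflHyp {r : ℝ} (he : ‖e‖ = 1) (hr : 0 ≤ r)
    (hu : ContinuousOn u (sphere 0 r)) :
    2 * ⟪sphereMoment u r, e⟫ = ⟪sphereMoment (u - u ∘ reflHyp e) r, e⟫ := by
  rw [reflHyp_eq_reflection he, two_mul_inner_sphereMoment hr hu]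

lemma inner_sphereMoment_nonneg_of_mem_reflMonotoneSet (hB : IsRotationInvariant B) (hu𝓤 : u ∈ 𝓤)
    (he : e ∈ reflMonotoneSet B 𝓤) (hx : x ∈ B) (hu : ContinuousOn u (sphere 0 ‖x‖)) :
    0 ≤ ⟪sphereMoment u ‖x‖, e⟫ := by
  obtain ⟨he1, he⟩ := (mem_reflMonotoneSet_iff hB).1 he
  have difference_nonneg := inner_sphereMoment_nonneg (norm_nonneg x)
    (hu.sub (continuousOn_comp_reflHyp he1 hu)) fun y hy => he u hu𝓤 y (hB x hx hy)
  linarith [two_mul_inner_sphereMoment_eq_sub_comp_reflHyp he1 (norm_nonneg x) hu]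

lemma inner_sphereMoment_pos_of_mem_reflMonotoneSet (hB : IsRotationInvariant B) (hu𝓤 : u ∈ 𝓤)
    (he : e ∈ reflMonotoneSet B 𝓤) (hx : x ∈ B) (hu : ContinuousOn u (sphere 0 ‖x‖))
    (hxe : (u x - u (reflHyp e x)) * ⟪x, e⟫ ≠ 0) :
    0 < ⟪sphereMoment u ‖x‖, e⟫ := by
  obtain ⟨he1, he⟩ := (mem_reflMonotoneSet_iff hB).1 he
  have difference_pos := inner_sphereMoment_pos (norm_nonneg x)
    (hu.sub (continuousOn_comp_reflHyp he1 hu)) (fun y hy => he u hu𝓤 y (hB x hx hy))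
    (mem_sphere_zero_iff_norm.2 rfl) hxe
  linarith [two_mul_inner_sphereMoment_eq_sub_comp_reflHyp he1 (norm_nonneg x) hu]

lemma exists_sphereMoment_ne_zero (hB : IsRotationInvariant B)
    (h𝓤 : ∀ u ∈ 𝓤, ∀ x ∈ B, ContinuousOn u (sphere 0 ‖x‖))
    (heM : e ∉ reflMonotoneSet B 𝓤) (hneM : -e ∈ reflMonotoneSet B 𝓤) :
    ∃ u ∈ 𝓤, ∃ x ∈ B, sphereMoment u ‖x‖ ≠ 0 := by
  have he : ‖e‖ = 1 := by simpa using hneM.1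
  simp only [mem_reflMonotoneSet_iff hB, he, true_and, not_forall, not_le] at heM
  obtain ⟨u, hu, x, hx, hneg⟩ := heM
  have moment_pos := inner_sphereMoment_pos_of_mem_reflMonotoneSet hB hu hneM hx (h𝓤 u hu x hx) (by
    rw [reflHyp_neg, inner_neg_right, mul_neg]
    exact neg_ne_zero.2 hneg.ne)
  exact ⟨u, hu, x, hx, fun h => by simp [h] at moment_pos⟩

lemma exists_open_hemisphere_subset_reflMonotoneSet [NeZero N] (hB : IsRotationInvariant B)
    (h𝓤 : ∀ u ∈ 𝓤, ∀ x ∈ B, ContinuousOn u (sphere 0 ‖x‖))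
    (hSM : ∀ e : EuclideanSpace ℝ (Fin N), ‖e‖ = 1 →
      e ∈ reflMonotoneSet B 𝓤 ∨ -e ∈ reflMonotoneSet B 𝓤) :
    ∃ p : EuclideanSpace ℝ (Fin N), ‖p‖ = 1 ∧
      {f | ‖f‖ = 1 ∧ 0 < ⟪f, p⟫} ⊆ reflMonotoneSet B 𝓤 := by
  by_cases hM : ∀ e : EuclideanSpace ℝ (Fin N), ‖e‖ = 1 → e ∈ reflMonotoneSet B 𝓤
  · exact ⟨EuclideanSpace.single 0 1, by simp, fun f hf => hM f hf.1⟩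
  push Not at hM
  obtain ⟨e, he, heM⟩ := hM
  obtain ⟨u, hu, x, hx, hv⟩ :=
    exists_sphereMoment_ne_zero hB h𝓤 heM ((hSM e he).resolve_left heM)
  refine ⟨normalize (sphereMoment u ‖x‖), norm_normalize_eq_one_iff.2 hv, fun f ⟨hf, hfp⟩ => ?_⟩
  refine (hSM f hf).resolve_right fun hfM => ?_
  have nonpos : ⟪f, sphereMoment u ‖x‖⟫ ≤ 0 := by
    simpa [real_inner_comm] using
      inner_sphereMoment_nonneg_of_mem_reflMonotoneSet hB hu hfM hx (h𝓤 u hu x hx)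
  rw [real_inner_normalize_right] at hfp
  exact hfp.not_ge (mul_nonpos_of_nonneg_of_nonpos (by positivity) nonpos)

lemma foliatedSchwarzOn_of_closed_hemisphere_subset
    (hp : {f | ‖f‖ = 1 ∧ 0 ≤ ⟪f, p⟫} ⊆ reflMonotoneSet B 𝓤) (hu : u ∈ 𝓤) :
    FoliatedSchwarzOn B u p := by
  intro x hx y _ hxy hyx
  rcases eq_or_ne x y with rfl | hne
  · exact le_rfl
  have hd : x - y ≠ 0 := sub_ne_zero.2 hne
  have inner_nonneg : 0 ≤ ⟪normalize (x - y), p⟫ := by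
    rw [real_inner_normalize_left, inner_sub_left]
    exact mul_nonneg (by positivity) (sub_nonneg.2 hyx)
  have normal_mem := hp ⟨norm_normalize_eq_one_iff.2 hd, inner_nonneg⟩
  have inner_pos : 0 < ⟪x, normalize (x - y)⟫ := by
    rw [real_inner_normalize_right]
    exact mul_pos (inv_pos.2 (norm_pos_iff.2 hd)) (real_inner_sub_right_pos hxy hne)
  simpa only [reflHyp_normalize_sub hxy hne] using normal_mem.2 u hu x ⟨hx, inner_pos⟩

end ReflMonotoneSet

theorem foliatedSchwarz_of_sphere_eq_union_general [NeZero N]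
    {B : Set (EuclideanSpace ℝ (Fin N))} (hB : IsRotationInvariant B)
    {𝓤 : Set (EuclideanSpace ℝ (Fin N) → ℝ)}
    (h𝓤 : ∀ u ∈ 𝓤, ∀ x ∈ B, ContinuousOn u (sphere 0 ‖x‖))
    (hSM : ∀ e : EuclideanSpace ℝ (Fin N), ‖e‖ = 1 →
      e ∈ reflMonotoneSet B 𝓤 ∨ -e ∈ reflMonotoneSet B 𝓤) :
    ∃ p : EuclideanSpace ℝ (Fin N), ‖p‖ = 1 ∧ ∀ u ∈ 𝓤, FoliatedSchwarzOn B u p := by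
  obtain ⟨p, hp, open_subset⟩ := exists_open_hemisphere_subset_reflMonotoneSet hB h𝓤 hSM
  have hp0 : p ≠ 0 := norm_ne_zero_iff.1 (by simp [hp])
  have closed_subset : {f | ‖f‖ = 1 ∧ 0 ≤ ⟪f, p⟫} ⊆ reflMonotoneSet B 𝓤 := fun f ⟨hf, hfp⟩ =>
    closure_minimal open_subset (isClosed_reflMonotoneSet hB h𝓤)
      (mem_closure_setOf_norm_eq_one_inner_pos hp0 hf hfp)
  exact ⟨p, hp, fun u hu => foliatedSchwarzOn_of_closed_hemisphere_subset closed_subset hu⟩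

/-- Proposition `newprop` of the paper:
if `S = M ∪ (−M)`, then all functions in `𝓤` are foliated Schwarz symmetric
with respect to one common unit vector `p`. -/
theorem foliatedSchwarz_of_sphere_eq_union
    (N : ℕ) (hN : 2 ≤ N)
    (B : Set (EuclideanSpace ℝ (Fin N))) (hB : IsRadialDomain B)
    (𝓤 : Set (EuclideanSpace ℝ (Fin N) → ℝ))
    (h𝓤 : ∀ u ∈ 𝓤, ContinuousOn u B)
    (hSM : ∀ e : EuclideanSpace ℝ (Fin N), ‖e‖ = 1 →
      e ∈ reflMonotoneSet B 𝓤 ∨ -e ∈ reflMonotoneSet B 𝓤) :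
    ∃ p : EuclideanSpace ℝ (Fin N), ‖p‖ = 1 ∧
      ∀ u ∈ 𝓤, FoliatedSchwarzOn B u p := by
  have : NeZero N := ⟨by omega⟩
  have hB' := hB.isRotationInvariant
  exact foliatedSchwarz_of_sphere_eq_union_general hB'
    (fun u hu x hx => (h𝓤 u hu).mono (hB' x hx)) hSM

end
end

section
/- Let N ≥ 2, let B ⊂ ℝ^N be a radial domain, let 𝓤 be a set of continuous functions on B, and define M = {e ∈ S : u(x) ≥ u(σ_e(x)) for all x ∈ B(e) and all u ∈ 𝓤}. Let ẽ ∈ M. Suppose that for every two-dimensional linear subspace P ⊆ ℝ^N containing ẽ there are two distinct points p₁, p₂ lying in the same connected component of M ∩ P such that u ≡ u ∘ σ_{p₁} and u ≡ u ∘ σ_{p₂} on B for every u ∈ 𝓤. Then there exists p ∈ S such that every u ∈ 𝓤 is foliated Schwarz symmetric with respect to p. -/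
/-!
Directions are not normalised: `M` is the closed cone of monotone directions, and `T = M ∩ -M` is
the set of symmetry directions, which is closed and stable under the reflections `σ_e`, `e ∈ T`.

Planar core: if `a, b ∈ T` bound a sector contained in `M`, then the whole plane of `a` and `b` is
in `T`. For unit `a, b` with `0 ≤ ⟪a, b⟫` and `w = s a + t b`, `w' = t a + s b` in the sector, one
has `σ_{w'} σ_b = σ_a σ_w`, which turns monotonicity along `w'` into `u x ≤ u (σ_w x)`; this works
for every `x` on the positive side of `w`, possibly after exchanging `a` and `b`, so `w ∈ T`.
Reflections of the sector then fill the plane. An obtuse sector contains an acute one bounded by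
elements of `T`.

Suppose that neither `e` nor `-e` is in `M`. In the plane of `e` and `e₀`, the component
containing `p₁` and `p₂` lies strictly on one side of `ℝ e`, so the sector between `p₁` and `p₂`
is in `M`, and the planar core gives `e ∈ T`, a contradiction. Hence `M ∪ -M` is the whole space,
and a connected set missing `T` lies in `M` or in `-M`. For the gaps of `T` on a segment with end
points in `T` this shows that `T` is a linear subspace; for the open half-space of a normal `p` to
`T` it shows that `M` contains a closed half-space. Now reflect `x` to `y` in the direction
`x - y`.
-/

open Set Metric Filter
open scoped RealInnerProductSpace

noncomputable section

variable {N : ℕ}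

section RotatingPlanes

open Topology Module

variable {E : Type*} [NormedAddCommGroup E] [InnerProductSpace ℝ E]

local notation "σ[" e "]" => Submodule.reflection (Submodule.span ℝ {e})ᗮ

/-! ### Reflections in hyperplanes -/

lemma reflection_orthogonal_singleton_apply (e x : E) :
    σ[e] x = x - (2 * ⟪x, e⟫ / ‖e‖ ^ 2) • e := by
  rw [Submodule.reflection_orthogonal_apply, Submodule.reflection_singleton_apply,
    real_inner_comm]
  simp only [RCLike.ofReal_real_eq_id, id_eq]
  module

lemma reflection_eq_self_of_inner_eq_zero {e x : E} (h : ⟪x, e⟫ = 0) : σ[e] x = x :=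
  Submodule.reflection_mem_subspace_eq_self (Submodule.mem_orthogonal_singleton_iff_inner_left.2 h)

lemma reflection_zero_apply (x : E) : σ[(0 : E)] x = x :=
  reflection_eq_self_of_inner_eq_zero (inner_zero_right x)

lemma reflection_smul {r : ℝ} (hr : r ≠ 0) (e x : E) : σ[r • e] x = σ[e] x := by
  simp only [Submodule.span_singleton_smul_eq hr.isUnit]

lemma reflection_neg (e x : E) : σ[-e] x = σ[e] x := by
  simpa using reflection_smul (neg_ne_zero.2 one_ne_zero) e x

lemma inner_reflection_left (e x y : E) : ⟪σ[e] x, y⟫ = ⟪x, σ[e] y⟫ := by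
  rw [← LinearIsometryEquiv.inner_map_map σ[e], Submodule.reflection_reflection]

lemma inner_reflection_self (e x : E) : ⟪σ[e] x, e⟫ = -⟪x, e⟫ := by
  rw [inner_reflection_left, Submodule.reflection_orthogonalComplement_singleton_eq_neg,
    inner_neg_right]

lemma reflection_map_singleton_apply {F : Type*} [NormedAddCommGroup F] [InnerProductSpace ℝ F]
    (f : E ≃ₗᵢ[ℝ] F) (e x : E) :
    σ[f e] (f x) = f (σ[e] x) := by
  simp only [reflection_orthogonal_singleton_apply, LinearIsometryEquiv.inner_map_map,
    LinearIsometryEquiv.norm_map, map_sub, map_smul]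

lemma reflection_add_apply_neg {x v : E} (h : ‖x‖ = ‖v‖) : σ[x + v] (-v) = x := by
  have hneg : σ[-v - x] (-v) = x := Submodule.reflection_sub ((norm_neg v).trans h.symm)
  rwa [← neg_add', reflection_neg, add_comm] at hneg

lemma continuousAt_reflection_apply {e : E} (he : e ≠ 0) (x : E) :
    ContinuousAt (fun e => σ[e] x) e := by
  simp only [reflection_orthogonal_singleton_apply]
  have : ‖e‖ ^ 2 ≠ 0 := by simpa using he
  fun_prop (disch := assumption)

lemma norm_smul_add_smul_sq {a b : E} (ha : ‖a‖ = 1) (hb : ‖b‖ = 1) (s t : ℝ) :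
    ‖s • a + t • b‖ ^ 2 = s ^ 2 + t ^ 2 + 2 * (s * t * ⟪a, b⟫) := by
  rw [norm_add_sq_real, norm_smul, norm_smul, ha, hb, real_inner_smul_left, real_inner_smul_right,
    mul_one, mul_one, Real.norm_eq_abs, Real.norm_eq_abs, sq_abs, sq_abs]
  ring

/- The direction `t • a + s • b` is as far from `b` as `s • a + t • b` is from `a`, so both sides
are the same rotation of the plane of `a` and `b`. -/
lemma reflection_swap_comp {a b : E} (ha : ‖a‖ = 1) (hb : ‖b‖ = 1) {s t : ℝ}
    (h : s • a + t • b ≠ 0) (x : E) :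
    σ[t • a + s • b] (σ[b] x) = σ[a] (σ[s • a + t • b] x) := by
  have haa : ⟪a, a⟫ = 1 := by rw [real_inner_self_eq_norm_sq, ha, one_pow]
  have hbb : ⟪b, b⟫ = 1 := by rw [real_inner_self_eq_norm_sq, hb, one_pow]
  have hswap : ‖t • a + s • b‖ ^ 2 = ‖s • a + t • b‖ ^ 2 := by
    rw [norm_smul_add_smul_sq ha hb, norm_smul_add_smul_sq ha hb]
    ring
  have hD := norm_smul_add_smul_sq ha hb s t
  have hD₀ : ‖s • a + t • b‖ ^ 2 ≠ 0 := by simpa using h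
  simp only [reflection_orthogonal_singleton_apply, hswap]
  generalize ‖s • a + t • b‖ ^ 2 = D at hD hD₀
  simp only [ha, hb, inner_sub_left, inner_add_left, inner_add_right, real_inner_smul_left,
    real_inner_smul_right, haa, hbb, real_inner_comm a b]
  match_scalars
  · ring
  · field_simp
    linear_combination (-⟪x, b⟫) * hD
  · field_simp
    linear_combination ⟪x, a⟫ * hD

lemma reflection_add_reflection_swap {a b : E} (ha : ‖a‖ = 1) (hb : ‖b‖ = 1) (s t : ℝ) :
    σ[a] (t • a + s • b) + σ[b] (t • a + s • b) = (-2 * ⟪a, b⟫) • (s • a + t • b) := by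
  simp only [reflection_orthogonal_singleton_apply, ha, hb, inner_add_left, real_inner_smul_left,
    real_inner_self_eq_norm_sq, real_inner_comm a b]
  module

/-! ### Monotone directions and symmetry directions -/

/-- A set that contains every point having the norm of one of its points, such as a ball or an
annulus centered at the origin. -/
def IsRadial (B : Set E) : Prop :=
  ∀ ⦃x y : E⦄, ‖x‖ = ‖y‖ → x ∈ B → y ∈ B

/-- The cone over the set `M` of directions whose reflection decreases every `u ∈ 𝓤` on the half
of `B` they point to. Directions are not normalised, and `0` belongs to the cone. -/
def monotoneDirections (B : Set E) (𝓤 : Set (E → ℝ)) : Set E :=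
  {e | ∀ u ∈ 𝓤, ∀ x ∈ B, 0 ≤ ⟪x, e⟫ → u (σ[e] x) ≤ u x}

/-- The cone of directions whose reflection leaves every `u ∈ 𝓤` invariant on `B`. -/
def symmetryDirections (B : Set E) (𝓤 : Set (E → ℝ)) : Set E :=
  {e | ∀ u ∈ 𝓤, ∀ x ∈ B, u (σ[e] x) = u x}

variable {B : Set E} {𝓤 : Set (E → ℝ)} {a b c e v x : E} {r s t : ℝ}

lemma IsRadial.reflection_mem (hB : IsRadial B) (hx : x ∈ B) (e : E) : σ[e] x ∈ B :=
  hB (LinearIsometryEquiv.norm_map _ x).symm hx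

lemma symmetryDirections_subset : symmetryDirections B 𝓤 ⊆ monotoneDirections B 𝓤 :=
  fun _ he u hu x hx _ => (he u hu x hx).le

lemma zero_mem_symmetryDirections : (0 : E) ∈ symmetryDirections B 𝓤 :=
  fun u _ x _ => by rw [reflection_zero_apply]

lemma smul_mem_symmetryDirections (r : ℝ) (he : e ∈ symmetryDirections B 𝓤) :
    r • e ∈ symmetryDirections B 𝓤 := by
  rcases eq_or_ne r 0 with rfl | hr
  · rw [zero_smul]
    exact zero_mem_symmetryDirections
  · intro u hu x hx
    rw [reflection_smul hr]
    exact he u hu x hx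

lemma smul_mem_symmetryDirections_iff (hr : r ≠ 0) :
    r • e ∈ symmetryDirections B 𝓤 ↔ e ∈ symmetryDirections B 𝓤 :=
  ⟨fun h => by simpa [smul_smul, hr] using smul_mem_symmetryDirections r⁻¹ h,
    smul_mem_symmetryDirections r⟩

lemma neg_mem_symmetryDirections (he : e ∈ symmetryDirections B 𝓤) :
    -e ∈ symmetryDirections B 𝓤 := by
  simpa using smul_mem_symmetryDirections (-1) he

lemma smul_mem_monotoneDirections (hr : 0 ≤ r) (he : e ∈ monotoneDirections B 𝓤) :
    r • e ∈ monotoneDirections B 𝓤 := by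
  rcases hr.eq_or_lt with rfl | hr
  · rw [zero_smul]
    exact symmetryDirections_subset zero_mem_symmetryDirections
  · intro u hu x hx hxe
    rw [reflection_smul hr.ne']
    rw [real_inner_smul_right] at hxe
    exact he u hu x hx (nonneg_of_mul_nonneg_right hxe hr)

lemma mem_symmetryDirections_of_le (hB : IsRadial B) (he : e ∈ monotoneDirections B 𝓤)
    (h : ∀ u ∈ 𝓤, ∀ x ∈ B, 0 ≤ ⟪x, e⟫ → u x ≤ u (σ[e] x)) : e ∈ symmetryDirections B 𝓤 := by
  intro u hu x hx
  rcases le_total 0 ⟪x, e⟫ with hxe | hxe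
  · exact (he u hu x hx hxe).antisymm (h u hu x hx hxe)
  · have hx' := hB.reflection_mem hx e
    have hxe' : 0 ≤ ⟪σ[e] x, e⟫ := by rwa [inner_reflection_self, neg_nonneg]
    have hle := he u hu _ hx' hxe'
    have hge := h u hu _ hx' hxe'
    rw [Submodule.reflection_reflection] at hle hge
    exact hge.antisymm hle

lemma mem_symmetryDirections_iff (hB : IsRadial B) :
    e ∈ symmetryDirections B 𝓤 ↔ e ∈ monotoneDirections B 𝓤 ∧ -e ∈ monotoneDirections B 𝓤 := by
  refine ⟨fun he => ⟨symmetryDirections_subset he,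
    symmetryDirections_subset (neg_mem_symmetryDirections he)⟩, fun ⟨he, hneg⟩ =>
    mem_symmetryDirections_of_le hB he fun u hu x hx hxe => ?_⟩
  have hle := hneg u hu _ (hB.reflection_mem hx e) (by simpa [inner_reflection_self] using hxe)
  rwa [reflection_neg, Submodule.reflection_reflection] at hle

lemma reflection_mem_symmetryDirections (hB : IsRadial B) (he : e ∈ symmetryDirections B 𝓤)
    (hv : v ∈ symmetryDirections B 𝓤) : σ[e] v ∈ symmetryDirections B 𝓤 := by
  intro u hu x hx
  have hx' := hB.reflection_mem hx e
  calc u (σ[σ[e] v] x) = u (σ[e] (σ[v] (σ[e] x))) := by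
        rw [← reflection_map_singleton_apply, Submodule.reflection_reflection]
    _ = u x := by rw [he u hu _ (hB.reflection_mem hx' v), hv u hu _ hx', he u hu x hx]

lemma isClosed_monotoneDirections (hB : IsRadial B) (h𝓤 : ∀ u ∈ 𝓤, ContinuousOn u B) :
    IsClosed (monotoneDirections B 𝓤) := by
  refine isClosed_of_closure_subset fun e he u hu x hx hxe => ?_
  rcases hxe.eq_or_lt with hxe | hxe
  · rw [reflection_eq_self_of_inner_eq_zero hxe.symm]
  have he₀ : e ≠ 0 := by
    rintro rfl
    simp at hxe
  have := mem_closure_iff_nhdsWithin_neBot.1 he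
  have hlim : Tendsto (fun v => σ[v] x) (𝓝[monotoneDirections B 𝓤] e) (𝓝[B] (σ[e] x)) :=
    tendsto_nhdsWithin_iff.2
      ⟨(continuousAt_reflection_apply he₀ x).tendsto.mono_left nhdsWithin_le_nhds,
        Eventually.of_forall fun v => hB.reflection_mem hx v⟩
  have hpos : ∀ᶠ v in 𝓝[monotoneDirections B 𝓤] e, 0 < ⟪x, v⟫ :=
    nhdsWithin_le_nhds ((continuous_const.inner continuous_id).continuousAt.eventually_const_lt hxe)
  refine le_of_tendsto ((h𝓤 u hu _ (hB.reflection_mem hx e)).tendsto.comp hlim) ?_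
  filter_upwards [hpos, self_mem_nhdsWithin] with v hv hvM using hvM u hu x hx hv.le

lemma isClosed_symmetryDirections (hB : IsRadial B) (h𝓤 : ∀ u ∈ 𝓤, ContinuousOn u B) :
    IsClosed (symmetryDirections B 𝓤) := by
  have hM := isClosed_monotoneDirections hB h𝓤
  convert hM.inter (hM.preimage continuous_neg) using 1
  ext e
  exact mem_symmetryDirections_iff hB

/-! ### Sectors bounded by symmetry directions -/

lemma mem_cone_pair : v ∈ PointedCone.hull ℝ {a, b} ↔
    ∃ s t : ℝ, 0 ≤ s ∧ 0 ≤ t ∧ s • a + t • b = v := by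
  rw [PointedCone.hull, Submodule.mem_span_pair]
  exact ⟨fun ⟨s, t, h⟩ => ⟨s, t, s.2, t.2, h⟩, fun ⟨s, t, hs, ht, h⟩ => ⟨⟨s, hs⟩, ⟨t, ht⟩, h⟩⟩

lemma le_apply_reflection_of_inner_nonneg (hB : IsRadial B) (ha : ‖a‖ = 1) (hb : ‖b‖ = 1)
    (haT : a ∈ symmetryDirections B 𝓤) (hbT : b ∈ symmetryDirections B 𝓤)
    (hw : s • a + t • b ≠ 0) (hM : t • a + s • b ∈ monotoneDirections B 𝓤) {u : E → ℝ}
    (hu : u ∈ 𝓤) (hx : x ∈ B) (h : 0 ≤ ⟪σ[a] (σ[s • a + t • b] x), t • a + s • b⟫) :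
    u x ≤ u (σ[s • a + t • b] x) := by
  have hwx := hB.reflection_mem hx (s • a + t • b)
  calc u x = u (σ[b] x) := (hbT u hu x hx).symm
    _ = u (σ[t • a + s • b] (σ[a] (σ[s • a + t • b] x))) := by
      rw [← reflection_swap_comp ha hb hw, Submodule.reflection_reflection]
    _ ≤ u (σ[a] (σ[s • a + t • b] x)) := hM u hu _ (hB.reflection_mem hwx a) h
    _ = u (σ[s • a + t • b] x) := haT u hu _ hwx

lemma cone_pair_subset_symmetryDirections (hB : IsRadial B) (ha : ‖a‖ = 1) (hb : ‖b‖ = 1)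
    (hab : 0 ≤ ⟪a, b⟫) (haT : a ∈ symmetryDirections B 𝓤) (hbT : b ∈ symmetryDirections B 𝓤)
    (hM : (PointedCone.hull ℝ {a, b} : Set E) ⊆ monotoneDirections B 𝓤) :
    (PointedCone.hull ℝ {a, b} : Set E) ⊆ symmetryDirections B 𝓤 := by
  intro w hw
  obtain ⟨s, t, hs, ht, rfl⟩ := mem_cone_pair.1 hw
  rcases eq_or_ne (s • a + t • b) 0 with h₀ | h₀
  · rw [h₀]
    exact zero_mem_symmetryDirections
  refine mem_symmetryDirections_of_le hB (hM hw) fun u hu x hx hxw => ?_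
  have hswap : t • a + s • b ∈ monotoneDirections B 𝓤 :=
    hM (mem_cone_pair.2 ⟨t, s, ht, hs, rfl⟩)
  have hsum : ⟪σ[a] (σ[s • a + t • b] x), t • a + s • b⟫
      + ⟪σ[b] (σ[s • a + t • b] x), t • a + s • b⟫ = 2 * ⟪a, b⟫ * ⟪x, s • a + t • b⟫ := by
    rw [inner_reflection_left a, inner_reflection_left b, ← inner_add_right,
      reflection_add_reflection_swap ha hb, real_inner_smul_right, inner_reflection_self]
    ring
  have hnonneg : 0 ≤ 2 * ⟪a, b⟫ * ⟪x, s • a + t • b⟫ := by positivity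
  rcases lt_or_ge ⟪σ[a] (σ[s • a + t • b] x), t • a + s • b⟫ 0 with hneg | hpos
  · rw [add_comm (s • a)] at h₀ ⊢
    refine le_apply_reflection_of_inner_nonneg hB hb ha hbT haT h₀
      (by rwa [add_comm]) hu hx ?_
    rw [add_comm (t • b), add_comm (s • b)]
    linarith
  · exact le_apply_reflection_of_inner_nonneg hB ha hb haT hbT h₀ hswap hu hx hpos

lemma mem_symmetryDirections_of_ray_from (hB : IsRadial B) (hcT : c ∈ symmetryDirections B 𝓤)
    (hc : c ≠ 0) (n : ℕ) (hxc : 0 ≤ ⟪x, c⟫)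
    (hray : ∀ r ≥ n * (‖x‖ / ‖c‖), x + r • c ∈ symmetryDirections B 𝓤) :
    x ∈ symmetryDirections B 𝓤 := by
  have hc' : 0 < ‖c‖ := norm_pos_iff.2 hc
  induction n generalizing x with
  | zero => simpa using hray 0 (by simp)
  | succ n ih =>
    have hd : 0 ≤ ‖x‖ / ‖c‖ := by positivity
    have hnorm : ‖(‖x‖ / ‖c‖) • c‖ = ‖x‖ := by
      rw [norm_smul, Real.norm_of_nonneg hd, div_mul_cancel₀ _ hc'.ne']
    have hbisector : x + (‖x‖ / ‖c‖) • c ∈ symmetryDirections B 𝓤 := by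
      refine ih ?_ fun r hr => ?_
      · rw [inner_add_left, real_inner_smul_left, real_inner_self_eq_norm_sq]
        positivity
      · have hle : ‖x‖ ≤ ‖x + (‖x‖ / ‖c‖) • c‖ := by
          refine le_of_sq_le_sq ?_ (norm_nonneg _)
          rw [norm_add_sq_real, hnorm, real_inner_smul_right]
          have := mul_nonneg hd hxc
          linarith [sq_nonneg ‖x‖]
        rw [add_assoc, ← add_smul]
        refine hray _ ?_
        have : n * (‖x‖ / ‖c‖) ≤ r := le_trans (by gcongr) hr
        push_cast
        linarith
    -- The bisector reflects a negative multiple of `c` to `x`.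
    rw [← reflection_add_apply_neg hnorm.symm]
    exact reflection_mem_symmetryDirections hB hbisector
      (neg_mem_symmetryDirections (smul_mem_symmetryDirections _ hcT))

lemma mem_symmetryDirections_of_ray (hB : IsRadial B) (hcT : c ∈ symmetryDirections B 𝓤)
    (hxc : 0 ≤ ⟪x, c⟫) (hray : ∀ᶠ r : ℝ in atTop, x + r • c ∈ symmetryDirections B 𝓤) :
    x ∈ symmetryDirections B 𝓤 := by
  rcases eq_or_ne x 0 with rfl | hx
  · exact zero_mem_symmetryDirections
  rcases eq_or_ne c 0 with rfl | hc
  · simpa using hray.exists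
  have hd : 0 < ‖x‖ / ‖c‖ := div_pos (norm_pos_iff.2 hx) (norm_pos_iff.2 hc)
  obtain ⟨r₀, hr₀⟩ := eventually_atTop.1 hray
  obtain ⟨n, hn⟩ := exists_nat_ge (r₀ / (‖x‖ / ‖c‖))
  exact mem_symmetryDirections_of_ray_from hB hcT hc n hxc
    fun r hr => hr₀ r (((div_le_iff₀ hd).1 hn).trans hr)

lemma span_pair_subset_of_cone_pair_subset (hB : IsRadial B)
    (h : (PointedCone.hull ℝ {a, b} : Set E) ⊆ symmetryDirections B 𝓤) :
    (Submodule.span ℝ {a, b} : Set E) ⊆ symmetryDirections B 𝓤 := by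
  have hcone {s t : ℝ} (hs : 0 ≤ s) (ht : 0 ≤ t) : s • a + t • b ∈ symmetryDirections B 𝓤 :=
    h (mem_cone_pair.2 ⟨s, t, hs, ht, rfl⟩)
  have hhalf {s t : ℝ} (hst : 0 ≤ ⟪s • a + t • b, a + b⟫) :
      s • a + t • b ∈ symmetryDirections B 𝓤 := by
    refine mem_symmetryDirections_of_ray hB
      (by simpa using hcone zero_le_one zero_le_one) hst ?_
    filter_upwards [eventually_ge_atTop (-s), eventually_ge_atTop (-t)] with r hrs hrt
    convert hcone (neg_le_iff_add_nonneg.1 hrs) (neg_le_iff_add_nonneg.1 hrt) using 1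
    module
  intro v hv
  obtain ⟨s, t, rfl⟩ := Submodule.mem_span_pair.1 hv
  rcases le_total 0 ⟪s • a + t • b, a + b⟫ with hst | hst
  · exact hhalf hst
  · have hneg : -(s • a + t • b) = (-s) • a + (-t) • b := by module
    rw [← neg_neg (s • a + t • b)]
    refine neg_mem_symmetryDirections ?_
    rw [hneg]
    exact hhalf (by rwa [← hneg, inner_neg_left, neg_nonneg])

lemma span_pair_subset_symmetryDirections_of_norm_eq_one (hB : IsRadial B) (ha : ‖a‖ = 1)
    (hb : ‖b‖ = 1) (haT : a ∈ symmetryDirections B 𝓤) (hbT : b ∈ symmetryDirections B 𝓤)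
    (hM : (PointedCone.hull ℝ {a, b} : Set E) ⊆ monotoneDirections B 𝓤) :
    (Submodule.span ℝ {a, b} : Set E) ⊆ symmetryDirections B 𝓤 := by
  wlog hab : 0 ≤ ⟪a, b⟫ generalizing a
  -- Replacing `a` by `σ[b] a` trades an obtuse sector for an acute one inside it.
  · have hba : σ[b] a = a + (-2 * ⟪a, b⟫) • b := by
      rw [reflection_orthogonal_singleton_apply, hb]
      module
    have hspan : (Submodule.span ℝ {a, b} : Set E) ⊆ Submodule.span ℝ {σ[b] a, b} := by
      refine Submodule.span_le.2 (Set.pair_subset ?_ (Submodule.mem_span_of_mem (by simp)))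
      exact Submodule.mem_span_pair.2 ⟨1, 2 * ⟪a, b⟫, by rw [hba]; module⟩
    refine hspan.trans (this (by rwa [LinearIsometryEquiv.norm_map])
      (reflection_mem_symmetryDirections hB hbT haT) (Subset.trans ?_ hM) ?_)
    · refine Submodule.span_le.2 (Set.pair_subset ?_ (Submodule.mem_span_of_mem (by simp)))
      exact mem_cone_pair.2 ⟨1, -2 * ⟪a, b⟫, zero_le_one, by linarith, by rw [hba]; module⟩
    · rw [inner_reflection_self]
      linarith
  exact span_pair_subset_of_cone_pair_subset hB
    (cone_pair_subset_symmetryDirections hB ha hb hab haT hbT hM)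

lemma span_pair_subset_symmetryDirections (hB : IsRadial B)
    (haT : a ∈ symmetryDirections B 𝓤) (hbT : b ∈ symmetryDirections B 𝓤)
    (hM : (PointedCone.hull ℝ {a, b} : Set E) ⊆ monotoneDirections B 𝓤) :
    (Submodule.span ℝ {a, b} : Set E) ⊆ symmetryDirections B 𝓤 := by
  intro v hv
  obtain ⟨s, t, rfl⟩ := Submodule.mem_span_pair.1 hv
  rcases eq_or_ne a 0 with rfl | ha
  · simpa using smul_mem_symmetryDirections t hbT
  rcases eq_or_ne b 0 with rfl | hb
  · simpa using smul_mem_symmetryDirections s haT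
  have ha' := norm_ne_zero_iff.2 ha
  have hb' := norm_ne_zero_iff.2 hb
  refine span_pair_subset_symmetryDirections_of_norm_eq_one hB (a := ‖a‖⁻¹ • a) (b := ‖b‖⁻¹ • b)
    (by simp [norm_smul, ha]) (by simp [norm_smul, hb]) (smul_mem_symmetryDirections _ haT)
    (smul_mem_symmetryDirections _ hbT) (Subset.trans ?_ hM)
    (Submodule.mem_span_pair.2 ⟨s * ‖a‖, t * ‖b‖, by
      simp [smul_smul, ha', hb']⟩)
  refine Submodule.span_le.2 (Set.pair_subset ?_ ?_)
  · exact mem_cone_pair.2 ⟨‖a‖⁻¹, 0, by positivity, le_rfl, by simp⟩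
  · exact mem_cone_pair.2 ⟨0, ‖b‖⁻¹, le_rfl, by positivity, by simp⟩

/-! ### Planes through a monotone direction -/

lemma exists_inner_eq_zero_iff_mem_span_singleton {P : Submodule ℝ E} (hP : finrank ℝ P = 2)
    (heP : e ∈ P) (he : e ≠ 0) : ∃ n : E, ∀ v ∈ P, ⟪n, v⟫ = 0 ↔ v ∈ Submodule.span ℝ {e} := by
  have : Fact (finrank ℝ P = 1 + 1) := ⟨hP⟩
  have he' : (⟨e, heP⟩ : P) ≠ 0 := by simpa using he
  obtain ⟨n, hn₀, -⟩ :=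
    finrank_eq_one_iff'.1 (Submodule.finrank_orthogonal_span_singleton (𝕜 := ℝ) he')
  have hn₀' : (n : P) ≠ 0 := by simpa using hn₀
  have hne : ⟪((n : P) : E), e⟫ = 0 :=
    (Submodule.mem_orthogonal_singleton_iff_inner_left (u := (⟨e, heP⟩ : P))).1 n.2
  refine ⟨(n : P), fun v hv => ⟨fun hnv => ?_, fun hv => ?_⟩⟩
  · let L := (Submodule.span ℝ {(n : P)})ᗮ
    let eL : L := ⟨⟨e, heP⟩, Submodule.mem_orthogonal_singleton_iff_inner_right.2 hne⟩
    let vL : L := ⟨⟨v, hv⟩, Submodule.mem_orthogonal_singleton_iff_inner_right.2 hnv⟩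
    obtain ⟨r, hr⟩ := (finrank_eq_one_iff_of_nonzero' eL (by simpa [eL] using he)).1
      (Submodule.finrank_orthogonal_span_singleton (𝕜 := ℝ) hn₀') vL
    exact Submodule.mem_span_singleton.2 ⟨r, congrArg (fun w : L => ((w : P) : E)) hr⟩
  · obtain ⟨r, rfl⟩ := Submodule.mem_span_singleton.1 hv
    rw [real_inner_smul_right, hne, mul_zero]

lemma exists_normal_pos_of_isPreconnected {P : Submodule ℝ E} (hP : finrank ℝ P = 2)
    (heP : e ∈ P) (he : e ≠ 0) {K : Set E} (hK : IsPreconnected K) (hKP : K ⊆ P)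
    (hKe : Disjoint K (Submodule.span ℝ {e})) :
    ∃ n : E, (∀ v ∈ P, ⟪n, v⟫ = 0 ↔ v ∈ Submodule.span ℝ {e}) ∧ ∀ v ∈ K, 0 < ⟪n, v⟫ := by
  obtain ⟨n, hn⟩ := exists_inner_eq_zero_iff_mem_span_singleton hP heP he
  have hne : ∀ v ∈ K, ⟪n, v⟫ ≠ 0 := fun v hv h =>
    Set.disjoint_left.1 hKe hv ((hn v (hKP hv)).1 h)
  have hcont : ContinuousOn (fun v => ⟪n, v⟫) K := by fun_prop
  by_cases hpos : ∀ v ∈ K, 0 < ⟪n, v⟫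
  · exact ⟨n, hn, hpos⟩
  push Not at hpos
  obtain ⟨v₀, hv₀, hv₀n⟩ := hpos
  refine ⟨-n, by simpa using hn, fun v hv => ?_⟩
  rw [inner_neg_left, neg_pos]
  by_contra! hvn
  obtain ⟨w, hw, hwn⟩ := hK.intermediate_value hv₀ hv hcont ⟨hv₀n, hvn⟩
  exact hne w hw hwn

lemma cone_pair_subset_of_isPreconnected {P : Submodule ℝ E} (hP : finrank ℝ P = 2)
    {K : Set E} (hK : IsPreconnected K) (hKP : K ⊆ P) (hKM : K ⊆ monotoneDirections B 𝓤)
    {n : E} (hn : ∀ v ∈ K, 0 < ⟪n, v⟫) (ha : a ∈ K) (hb : b ∈ K) :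
    (PointedCone.hull ℝ {a, b} : Set E) ⊆ monotoneDirections B 𝓤 := by
  intro w hw
  obtain ⟨s, t, hs, ht, rfl⟩ := mem_cone_pair.1 hw
  by_contra hwM
  have hnw : 0 ≤ ⟪n, s • a + t • b⟫ := by
    rw [inner_add_right, real_inner_smul_right, real_inner_smul_right]
    have := hn a ha
    have := hn b hb
    positivity
  have hKw : Disjoint K (Submodule.span ℝ {s • a + t • b}) := by
    refine Set.disjoint_left.2 fun v hv hvw => ?_
    obtain ⟨r, rfl⟩ := Submodule.mem_span_singleton.1 hvw
    have hr : 0 < r := by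
      have := hn _ hv
      rw [real_inner_smul_right] at this
      exact pos_of_mul_pos_left this hnw
    refine hwM ?_
    simpa [smul_smul, hr.ne'] using smul_mem_monotoneDirections (inv_nonneg.2 hr.le) (hKM hv)
  have hw₀ : s • a + t • b ≠ 0 := fun h =>
    hwM (h ▸ symmetryDirections_subset zero_mem_symmetryDirections)
  have hwP : s • a + t • b ∈ P := P.add_mem (P.smul_mem _ (hKP ha)) (P.smul_mem _ (hKP hb))
  obtain ⟨m, hm, hmK⟩ := exists_normal_pos_of_isPreconnected hP hwP hw₀ hK hKP hKw
  have hmw := (hm _ hwP).2 (Submodule.mem_span_singleton_self _)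
  rw [inner_add_right, real_inner_smul_right, real_inner_smul_right] at hmw
  have hma := hmK a ha
  have hmb := hmK b hb
  obtain ⟨hsm, htm⟩ :=
    (add_eq_zero_iff_of_nonneg (mul_nonneg hs hma.le) (mul_nonneg ht hmb.le)).1 hmw
  refine hw₀ ?_
  rw [(mul_eq_zero_iff_right hma.ne').1 hsm, (mul_eq_zero_iff_right hmb.ne').1 htm, zero_smul,
    zero_smul, add_zero]

lemma smul_mem_or_neg_smul_mem_monotoneDirections (r : ℝ) (he : e ∈ monotoneDirections B 𝓤) :
    r • e ∈ monotoneDirections B 𝓤 ∨ -(r • e) ∈ monotoneDirections B 𝓤 := by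
  rcases le_total 0 r with hr | hr
  · exact .inl (smul_mem_monotoneDirections hr he)
  · rw [← neg_smul]
    exact .inr (smul_mem_monotoneDirections (neg_nonneg.2 hr) he)

lemma mem_or_neg_mem_of_plane (hB : IsRadial B) {P : Submodule ℝ E} (hP : finrank ℝ P = 2)
    {K : Set E} (hK : IsPreconnected K) (hKP : K ⊆ P)
    (hKM : K ⊆ sphere 0 1 ∩ monotoneDirections B 𝓤) (hab : a ≠ b) (ha : a ∈ K) (hb : b ∈ K)
    (haT : a ∈ symmetryDirections B 𝓤) (hbT : b ∈ symmetryDirections B 𝓤) (he : e ∈ P) :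
    e ∈ monotoneDirections B 𝓤 ∨ -e ∈ monotoneDirections B 𝓤 := by
  by_contra heM
  have he₀ : e ≠ 0 := by
    rintro rfl
    exact heM (.inl (symmetryDirections_subset zero_mem_symmetryDirections))
  have hKe : Disjoint K (Submodule.span ℝ {e}) := by
    refine Set.disjoint_left.2 fun v hv hve => heM ?_
    obtain ⟨r, rfl⟩ := Submodule.mem_span_singleton.1 hve
    have hr : r ≠ 0 := by
      rintro rfl
      simpa using (hKM hv).1
    simpa [smul_smul, hr] using smul_mem_or_neg_smul_mem_monotoneDirections r⁻¹ (hKM hv).2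
  obtain ⟨n, hn, hnK⟩ := exists_normal_pos_of_isPreconnected hP he he₀ hK hKP hKe
  have hT : ⟪n, b⟫ • a + (-⟪n, a⟫) • b ∈ symmetryDirections B 𝓤 :=
    span_pair_subset_symmetryDirections hB haT hbT
      (cone_pair_subset_of_isPreconnected hP hK hKP (hKM.trans inter_subset_right) hnK ha hb)
      (Submodule.mem_span_pair.2 ⟨_, _, rfl⟩)
  have he_line : ⟪n, b⟫ • a + (-⟪n, a⟫) • b ∈ Submodule.span ℝ {e} := by
    refine (hn _ (P.add_mem (P.smul_mem _ (hKP ha)) (P.smul_mem _ (hKP hb)))).1 ?_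
    rw [inner_add_right, real_inner_smul_right, real_inner_smul_right]
    ring
  obtain ⟨r, hr⟩ := Submodule.mem_span_singleton.1 he_line
  have hr₀ : r ≠ 0 := by
    rintro rfl
    rw [zero_smul, neg_smul, ← sub_eq_add_neg, eq_comm, sub_eq_zero] at hr
    have hnorm := congrArg norm hr
    rw [norm_smul, norm_smul, mem_sphere_zero_iff_norm.1 (hKM ha).1,
      mem_sphere_zero_iff_norm.1 (hKM hb).1, mul_one, mul_one,
      Real.norm_of_nonneg (hnK b hb).le, Real.norm_of_nonneg (hnK a ha).le] at hnorm
    rw [hnorm] at hr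
    exact hab (smul_right_injective E (hnK a ha).ne' hr)
  rw [← hr, smul_mem_symmetryDirections_iff hr₀] at hT
  exact heM (.inl (symmetryDirections_subset hT))

/-! ### The subspace of symmetry directions -/

lemma exists_gap_of_isClosed {α : Type*} [ConditionallyCompleteLinearOrder α] [TopologicalSpace α]
    [OrderTopology α] {A : Set α} (hA : IsClosed A) {x y m : α} (hx : x ∈ A) (hy : y ∈ A)
    (hm : m ∉ A) (hxm : x ≤ m) (hmy : m ≤ y) :
    ∃ l ∈ A, ∃ r ∈ A, l < m ∧ m < r ∧ Disjoint (Ioo l r) A := by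
  have hlow : BddAbove (A ∩ Iic m) := ⟨m, fun _ h => h.2⟩
  have hupp : BddBelow (A ∩ Ici m) := ⟨m, fun _ h => h.2⟩
  have hl := (hA.inter isClosed_Iic).csSup_mem ⟨x, hx, hxm⟩ hlow
  have hr := (hA.inter isClosed_Ici).csInf_mem ⟨y, hy, hmy⟩ hupp
  refine ⟨_, hl.1, _, hr.1, hl.2.lt_of_ne (ne_of_mem_of_not_mem hl.1 hm),
    hr.2.lt_of_ne (ne_of_mem_of_not_mem hr.1 hm).symm, ?_⟩
  refine Set.disjoint_left.2 fun z hz hzA => ?_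
  rcases le_total z m with h | h
  · exact hz.1.not_ge (le_csSup hlow ⟨hzA, h⟩)
  · exact hz.2.not_ge (csInf_le hupp ⟨hzA, h⟩)

lemma cone_pair_subset_of_openSegment_subset (ha : a ∈ monotoneDirections B 𝓤)
    (hb : b ∈ monotoneDirections B 𝓤) (h : openSegment ℝ a b ⊆ monotoneDirections B 𝓤) :
    (PointedCone.hull ℝ {a, b} : Set E) ⊆ monotoneDirections B 𝓤 := by
  intro w hw
  obtain ⟨s, t, hs, ht, rfl⟩ := mem_cone_pair.1 hw
  rcases hs.eq_or_lt with rfl | hs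
  · simpa using smul_mem_monotoneDirections ht hb
  rcases ht.eq_or_lt with rfl | ht
  · simpa using smul_mem_monotoneDirections hs.le ha
  have hst : s + t ≠ 0 := (add_pos hs ht).ne'
  have hmem : (s / (s + t)) • a + (t / (s + t)) • b ∈ openSegment ℝ a b :=
    ⟨_, _, by positivity, by positivity, by rw [← add_div, div_self hst], rfl⟩
  have hw' := smul_mem_monotoneDirections (add_pos hs ht).le (h hmem)
  rwa [smul_add, smul_smul, smul_smul, mul_div_cancel₀ _ hst, mul_div_cancel₀ _ hst] at hw'

lemma subset_or_neg_subset_of_isPreconnected (hB : IsRadial B) (h𝓤 : ∀ u ∈ 𝓤, ContinuousOn u B)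
    (hdir : ∀ e, e ∈ monotoneDirections B 𝓤 ∨ -e ∈ monotoneDirections B 𝓤) {K : Set E}
    (hK : IsPreconnected K) (hKT : Disjoint K (symmetryDirections B 𝓤)) :
    (∀ v ∈ K, v ∈ monotoneDirections B 𝓤) ∨ ∀ v ∈ K, -v ∈ monotoneDirections B 𝓤 := by
  have hM := isClosed_monotoneDirections hB h𝓤
  refine isPreconnected_iff_subset_of_disjoint_closed.1 hK _ _ hM (hM.preimage continuous_neg)
    (fun e _ => hdir e) ?_
  exact Set.disjoint_iff_inter_eq_empty.1
    (hKT.mono_right fun e he => (mem_symmetryDirections_iff hB).2 he)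

lemma span_pair_subset_of_disjoint_openSegment (hB : IsRadial B)
    (h𝓤 : ∀ u ∈ 𝓤, ContinuousOn u B)
    (hdir : ∀ e, e ∈ monotoneDirections B 𝓤 ∨ -e ∈ monotoneDirections B 𝓤)
    (ha : a ∈ symmetryDirections B 𝓤) (hb : b ∈ symmetryDirections B 𝓤)
    (hab : Disjoint (openSegment ℝ a b) (symmetryDirections B 𝓤)) :
    (Submodule.span ℝ {a, b} : Set E) ⊆ symmetryDirections B 𝓤 := by
  rcases subset_or_neg_subset_of_isPreconnected hB h𝓤 hdir
    (convex_openSegment a b).isPreconnected hab with hM | hM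
  · exact span_pair_subset_symmetryDirections hB ha hb
      (cone_pair_subset_of_openSegment_subset (symmetryDirections_subset ha)
        (symmetryDirections_subset hb) hM)
  · have ha' := neg_mem_symmetryDirections ha
    have hb' := neg_mem_symmetryDirections hb
    have hM' : openSegment ℝ (-a) (-b) ⊆ monotoneDirections B 𝓤 := by
      rintro _ ⟨s, t, hs, ht, hst, rfl⟩
      convert hM _ ⟨s, t, hs, ht, hst, rfl⟩ using 1
      module
    have hspan : Submodule.span ℝ {a, b} = Submodule.span ℝ {-a, -b} := by
      rw [← Submodule.span_neg, Set.neg_insert, Set.neg_singleton]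
    rw [hspan]
    exact span_pair_subset_symmetryDirections hB ha' hb'
      (cone_pair_subset_of_openSegment_subset (symmetryDirections_subset ha')
        (symmetryDirections_subset hb') hM')

lemma add_mem_symmetryDirections (hB : IsRadial B) (h𝓤 : ∀ u ∈ 𝓤, ContinuousOn u B)
    (hdir : ∀ e, e ∈ monotoneDirections B 𝓤 ∨ -e ∈ monotoneDirections B 𝓤)
    (ha : a ∈ symmetryDirections B 𝓤) (hb : b ∈ symmetryDirections B 𝓤) :
    a + b ∈ symmetryDirections B 𝓤 := by
  have hmid : midpoint ℝ a b = (2⁻¹ : ℝ) • (a + b) := by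
    rw [midpoint_eq_smul_add, invOf_eq_inv]
  rw [← smul_mem_symmetryDirections_iff (inv_ne_zero two_ne_zero : (2⁻¹ : ℝ) ≠ 0), ← hmid]
  let line : ℝ →ᵃ[ℝ] E := AffineMap.lineMap a b
  have hline : Continuous line := AffineMap.lineMap_continuous
  by_contra hT
  obtain ⟨l, hl, r, hr, hlm, hmr, hgap⟩ := exists_gap_of_isClosed (m := (⅟2 : ℝ))
    ((isClosed_symmetryDirections hB h𝓤).preimage hline)
    (show line 0 ∈ symmetryDirections B 𝓤 by simpa [line] using ha)
    (show line 1 ∈ symmetryDirections B 𝓤 by simpa [line] using hb) hT (by norm_num) (by norm_num)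
  have hsegment : openSegment ℝ (line l) (line r) = line '' Ioo l r := by
    rw [← image_openSegment, openSegment_eq_Ioo (hlm.trans hmr)]
  have hdisj : Disjoint (openSegment ℝ (line l) (line r)) (symmetryDirections B 𝓤) := by
    rw [hsegment]
    exact Set.disjoint_image_left.2 hgap
  have hmem : midpoint ℝ a b ∈ openSegment ℝ (line l) (line r) :=
    hsegment ▸ mem_image_of_mem line ⟨hlm, hmr⟩
  obtain ⟨s, t, -, -, -, hst⟩ := hmem
  exact hT (span_pair_subset_of_disjoint_openSegment hB h𝓤 hdir hl hr hdisj
    (Submodule.mem_span_pair.2 ⟨s, t, hst⟩))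

lemma exists_submodule_eq_symmetryDirections (hB : IsRadial B)
    (h𝓤 : ∀ u ∈ 𝓤, ContinuousOn u B)
    (hdir : ∀ e, e ∈ monotoneDirections B 𝓤 ∨ -e ∈ monotoneDirections B 𝓤) :
    ∃ W : Submodule ℝ E, (W : Set E) = symmetryDirections B 𝓤 :=
  ⟨{ carrier := symmetryDirections B 𝓤
     add_mem' := add_mem_symmetryDirections hB h𝓤 hdir
     zero_mem' := zero_mem_symmetryDirections
     smul_mem' := fun r _ he => smul_mem_symmetryDirections r he }, rfl⟩

/-! ### The half-space of monotone directions -/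

lemma mem_of_isClosed_of_halfSpace_subset {M : Set E} (hM : IsClosed M) {p : E}
    (hp : p ≠ 0) (h : ∀ v, 0 < ⟪v, p⟫ → v ∈ M) (hv : 0 ≤ ⟪v, p⟫) : v ∈ M := by
  have hlim : Tendsto (fun r : ℝ => v + r • p) (𝓝[>] 0) (𝓝 v) := by
    have hcont : Continuous fun r : ℝ => v + r • p := by fun_prop
    simpa using (hcont.tendsto 0).mono_left nhdsWithin_le_nhds
  refine hM.mem_of_tendsto hlim ?_
  filter_upwards [self_mem_nhdsWithin] with r hr
  refine h _ ?_
  rw [inner_add_left, real_inner_smul_left]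
  exact add_pos_of_nonneg_of_pos hv (mul_pos hr (real_inner_self_pos.2 hp))

lemma exists_halfSpace_subset_monotoneDirections [CompleteSpace E] [Nontrivial E]
    (hB : IsRadial B) (h𝓤 : ∀ u ∈ 𝓤, ContinuousOn u B)
    (hdir : ∀ e, e ∈ monotoneDirections B 𝓤 ∨ -e ∈ monotoneDirections B 𝓤) :
    ∃ p : E, ‖p‖ = 1 ∧ ∀ v, 0 ≤ ⟪v, p⟫ → v ∈ monotoneDirections B 𝓤 := by
  obtain ⟨W, hW⟩ := exists_submodule_eq_symmetryDirections hB h𝓤 hdir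
  by_cases hWtop : W = ⊤
  · obtain ⟨p, hp⟩ := exists_norm_eq E zero_le_one
    refine ⟨p, hp, fun v _ => symmetryDirections_subset ?_⟩
    rw [← hW, hWtop]
    exact mem_univ v
  have : CompleteSpace W :=
    (hW ▸ isClosed_symmetryDirections hB h𝓤 : IsClosed (W : Set E)).completeSpace_coe
  obtain ⟨q, hq, hq₀⟩ :=
    Submodule.exists_mem_ne_zero_of_ne_bot (mt Submodule.orthogonal_eq_bot_iff.1 hWtop)
  obtain ⟨p, hp, hpW⟩ : ∃ p : E, ‖p‖ = 1 ∧ p ∈ Wᗮ :=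
    ⟨‖q‖⁻¹ • q, by simp [norm_smul, hq₀], Wᗮ.smul_mem _ hq⟩
  have hdisj : Disjoint {v | 0 < ⟪v, p⟫} (symmetryDirections B 𝓤) := by
    refine Set.disjoint_left.2 fun v hv hvT => ?_
    rw [← hW] at hvT
    exact hv.ne' (hpW v hvT)
  have hconvex : Convex ℝ {v | 0 < ⟪v, p⟫} := by
    simpa only [innerₛₗ_apply_apply, real_inner_comm p] using
      convex_halfSpace_gt (innerₛₗ ℝ p).isLinear 0
  have hM := isClosed_monotoneDirections hB h𝓤
  have hp₀ : p ≠ 0 := ne_zero_of_norm_ne_zero (hp ▸ one_ne_zero)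
  rcases subset_or_neg_subset_of_isPreconnected hB h𝓤 hdir hconvex.isPreconnected hdisj
    with h | h
  · exact ⟨p, hp, fun v => mem_of_isClosed_of_halfSpace_subset hM hp₀ h⟩
  · refine ⟨-p, by rwa [norm_neg], fun v =>
      mem_of_isClosed_of_halfSpace_subset hM (neg_ne_zero.2 hp₀) fun v hv => ?_⟩
    rw [← neg_neg v]
    exact h _ (by simpa using hv)

lemma le_of_halfSpace_subset_monotoneDirections {p y : E} {u : E → ℝ}
    (hp : ∀ v, 0 ≤ ⟪v, p⟫ → v ∈ monotoneDirections B 𝓤) (hu : u ∈ 𝓤) (hx : x ∈ B)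
    (hxy : ‖x‖ = ‖y‖) (hle : ⟪y, p⟫ ≤ ⟪x, p⟫) : u y ≤ u x := by
  have hM : x - y ∈ monotoneDirections B 𝓤 := hp _ (by rwa [inner_sub_left, sub_nonneg])
  have hinner : 0 ≤ ⟪x, x - y⟫ := by
    rw [inner_sub_right, real_inner_self_eq_norm_sq, sub_nonneg, sq]
    nth_rw 2 [hxy]
    exact real_inner_le_norm x y
  simpa only [Submodule.reflection_sub hxy] using hM u hu x hx hinner

lemma mem_or_neg_mem_of_forall_plane (hB : IsRadial B) {e₀ : E}
    (he₀ : e₀ ∈ monotoneDirections B 𝓤) (he₀_ne : e₀ ≠ 0)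
    (hP : ∀ P : Submodule ℝ E, finrank ℝ P = 2 → e₀ ∈ P →
      ∃ p₁ ∈ symmetryDirections B 𝓤, ∃ p₂ ∈ symmetryDirections B 𝓤, p₁ ≠ p₂ ∧
        p₂ ∈ connectedComponentIn (sphere 0 1 ∩ monotoneDirections B 𝓤 ∩ P) p₁) (e : E) :
    e ∈ monotoneDirections B 𝓤 ∨ -e ∈ monotoneDirections B 𝓤 := by
  by_cases hindep : LinearIndependent ℝ ![e₀, e]
  · have hrank : finrank ℝ (Submodule.span ℝ {e₀, e}) = 2 := by
      have hcard := finrank_span_eq_card hindep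
      rwa [Matrix.range_cons_cons_empty, Fintype.card_fin] at hcard
    obtain ⟨p₁, hp₁, p₂, hp₂, hne, hmem⟩ := hP _ hrank (Submodule.mem_span_of_mem (by simp))
    have hp₁mem := connectedComponentIn_nonempty_iff.1 ⟨p₂, hmem⟩
    have hsub := connectedComponentIn_subset
      (sphere 0 1 ∩ monotoneDirections B 𝓤 ∩ Submodule.span ℝ {e₀, e}) p₁
    exact mem_or_neg_mem_of_plane hB hrank isPreconnected_connectedComponentIn
      (hsub.trans inter_subset_right) (hsub.trans inter_subset_left) hne
      (mem_connectedComponentIn hp₁mem) hmem hp₁ hp₂ (Submodule.mem_span_of_mem (by simp))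
  · rw [LinearIndependent.pair_iff' he₀_ne] at hindep
    push Not at hindep
    obtain ⟨r, rfl⟩ := hindep
    exact smul_mem_or_neg_smul_mem_monotoneDirections r he₀

theorem foliatedSchwarz_of_rotating_planes_general [CompleteSpace E] (hB : IsRadial B)
    (h𝓤 : ∀ u ∈ 𝓤, ContinuousOn u B) {e₀ : E} (he₀ : e₀ ∈ sphere 0 1 ∩ monotoneDirections B 𝓤)
    (hP : ∀ P : Submodule ℝ E, finrank ℝ P = 2 → e₀ ∈ P →
      ∃ p₁ ∈ symmetryDirections B 𝓤, ∃ p₂ ∈ symmetryDirections B 𝓤, p₁ ≠ p₂ ∧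
        p₂ ∈ connectedComponentIn (sphere 0 1 ∩ monotoneDirections B 𝓤 ∩ P) p₁) :
    ∃ p : E, ‖p‖ = 1 ∧
      ∀ u ∈ 𝓤, ∀ x ∈ B, ∀ y ∈ B, ‖x‖ = ‖y‖ → ⟪y, p⟫ ≤ ⟪x, p⟫ → u y ≤ u x := by
  have he₀_ne : e₀ ≠ 0 := ne_zero_of_mem_unit_sphere ⟨e₀, he₀.1⟩
  have : Nontrivial E := nontrivial_of_ne e₀ 0 he₀_ne
  obtain ⟨p, hp, hhalf⟩ := exists_halfSpace_subset_monotoneDirections hB h𝓤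
    (mem_or_neg_mem_of_forall_plane hB he₀.2 he₀_ne hP)
  exact ⟨p, hp, fun u hu x hx y _ hxy hle =>
    le_of_halfSpace_subset_monotoneDirections hhalf hu hx hxy hle⟩

/-! ### Radial domains in Euclidean space -/

lemma IsRadialDomain.isRadial {B : Set (EuclideanSpace ℝ (Fin N))} (hB : IsRadialDomain B) :
    IsRadial B := by
  rcases hB with ⟨R, -, rfl⟩ | ⟨r, R, -, -, rfl⟩ <;> intro x y hxy hx <;> simpa [← hxy] using hx

lemma reflHyp_eq_reflection_s9 {e : EuclideanSpace ℝ (Fin N)} (he : ‖e‖ = 1)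
    (x : EuclideanSpace ℝ (Fin N)) : reflHyp e x = σ[e] x := by
  rw [reflHyp, reflection_orthogonal_singleton_apply, he, one_pow, div_one]

lemma reflMonotoneSet_eq (B : Set (EuclideanSpace ℝ (Fin N)))
    (𝓤 : Set (EuclideanSpace ℝ (Fin N) → ℝ)) :
    reflMonotoneSet B 𝓤 = sphere 0 1 ∩ monotoneDirections B 𝓤 := by
  ext e
  simp only [reflMonotoneSet, halfDom, monotoneDirections, mem_inter_iff, mem_ofPred_eq,
    mem_sphere_zero_iff_norm]
  refine and_congr_right fun he => forall₂_congr fun u _ => ?_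
  simp only [reflHyp_eq_reflection_s9 he]
  refine ⟨fun h x hx hxe => ?_, fun h x hx => h x hx.1 hx.2.le⟩
  rcases hxe.eq_or_lt with hxe | hxe
  · rw [reflection_eq_self_of_inner_eq_zero hxe.symm]
  · exact h x ⟨hx, hxe⟩

lemma mem_symmetryDirections_of_reflHyp {B : Set (EuclideanSpace ℝ (Fin N))}
    {𝓤 : Set (EuclideanSpace ℝ (Fin N) → ℝ)} {e : EuclideanSpace ℝ (Fin N)} (he : ‖e‖ = 1)
    (h : ∀ u ∈ 𝓤, ∀ x ∈ B, u (reflHyp e x) = u x) : e ∈ symmetryDirections B 𝓤 := by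
  simp only [reflHyp_eq_reflection_s9 he] at h
  exact h

end RotatingPlanes

/-- Proposition `sec:char-foli-schw-1` of the paper:
let `etilde ∈ M`, and suppose that for every two-dimensional subspace `P` containing
`etilde` there are two distinct points `p₁, p₂` in the same connected component of
`M ∩ P` which are symmetry directions for every `u ∈ 𝓤`.  Then all `u ∈ 𝓤` are
foliated Schwarz symmetric with respect to a common unit vector `p`. -/
theorem foliatedSchwarz_of_rotating_planes
    (N : ℕ) (hN : 2 ≤ N)
    (B : Set (EuclideanSpace ℝ (Fin N))) (hB : IsRadialDomain B)
    (𝓤 : Set (EuclideanSpace ℝ (Fin N) → ℝ))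
    (h𝓤 : ∀ u ∈ 𝓤, ContinuousOn u B)
    (etilde : EuclideanSpace ℝ (Fin N)) (hetilde : etilde ∈ reflMonotoneSet B 𝓤)
    (hP : ∀ P : Submodule ℝ (EuclideanSpace ℝ (Fin N)),
      Module.finrank ℝ P = 2 → etilde ∈ P →
      ∃ p₁ p₂ : EuclideanSpace ℝ (Fin N), p₁ ≠ p₂ ∧
        p₁ ∈ reflMonotoneSet B 𝓤 ∩ (P : Set (EuclideanSpace ℝ (Fin N))) ∧
        p₂ ∈ connectedComponentIn
          (reflMonotoneSet B 𝓤 ∩ (P : Set (EuclideanSpace ℝ (Fin N)))) p₁ ∧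
        (∀ u ∈ 𝓤, ∀ x ∈ B, u (reflHyp p₁ x) = u x) ∧
        (∀ u ∈ 𝓤, ∀ x ∈ B, u (reflHyp p₂ x) = u x)) :
    ∃ p : EuclideanSpace ℝ (Fin N), ‖p‖ = 1 ∧
      ∀ u ∈ 𝓤, FoliatedSchwarzOn B u p := by
  refine foliatedSchwarz_of_rotating_planes_general hB.isRadial h𝓤
    (reflMonotoneSet_eq B 𝓤 ▸ hetilde) fun P hrank hmem => ?_
  obtain ⟨p₁, p₂, hne, hp₁, hp₂, hsymm₁, hsymm₂⟩ := hP P hrank hmem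
  exact ⟨p₁, mem_symmetryDirections_of_reflHyp hp₁.1.1 hsymm₁,
    p₂, mem_symmetryDirections_of_reflHyp (connectedComponentIn_subset _ _ hp₂).1.1 hsymm₂,
    hne, reflMonotoneSet_eq B 𝓤 ▸ hp₂⟩

end
end
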